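/- In the Artin monoid of type E_8, let V_6 = (x_6x_5x_3x_2x_1x_4x_3x_2x_5x_3x_4)(x_6x_5x_3x_2x_1), V_7 = x_7V_6(x_7x_6x_5x_3x_2x_4x_3x_5x_6)x_7, and V_8 = x_8V_7x_8V_7x_8. Then x_iV_8 = V_8x_i for every i ∈ {1,…,7}; in particular x_7V_8 = V_8x_7. -/

import Mathlib

/-!
If a generator `a` left-divides `b * v` in an Artin monoid, with `b` a generator other than `a`,
then so does the least common right multiple of `a` and `b`: it is `a * b` when they commute and
`a * b * a = b * a * b` when they are joined. Hence the quotient by `a` of the element represented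
by a positive word can be found by recursion on the length of the word (`extract`), and two
positive words are compared by dividing off the letters of the first one by one (`sameElt`).
Only the soundness of this procedure is needed: whenever it reports that two words represent the
same element, the successful divisions give a chain of defining relations between them
(`sameElt_sound`).

The procedure succeeds on the words `xᵢV₈` and `V₈xᵢ` because `V₈` is the quotient of the Garside
element of `E₈` by the one of its parabolic submonoid `E₇`. Both Garside elements are central in
their monoids, so the quotient commutes with `x₁, …, x₇`.
-/

namespace ArtinE

/-- The edges of the Coxeter graph `Eₙ` on `0`-based indices (index `i` corresponds to
the generator `x_{i+1}`): the long chain `x₁−x₂−x₃−x₅−x₆−x₇−x₈` and the branch vertex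
`x₄` attached to `x₃`. -/
def IsEdge (i j : ℕ) : Prop :=
  (i = 0 ∧ j = 1) ∨ (i = 1 ∧ j = 2) ∨ (i = 2 ∧ j = 3) ∨ (i = 2 ∧ j = 4) ∨
  (i = 4 ∧ j = 5) ∨ (i = 5 ∧ j = 6) ∨ (i = 6 ∧ j = 7)

/-- The relations of type `Eₙ` (`n ∈ {6,7,8}`): `xᵢxⱼxᵢ = xⱼxᵢxⱼ` for each edge pair
`{i,j}` of the graph, and `xᵢxⱼ = xⱼxᵢ` for all other pairs `i < j`. -/
def rels (n : ℕ) : FreeMonoid (Fin n) → FreeMonoid (Fin n) → Prop := fun u v =>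
  (∃ i j : Fin n, IsEdge i j ∧
    u = .of i * .of j * .of i ∧ v = .of j * .of i * .of j) ∨
  (∃ i j : Fin n, i < j ∧ ¬ IsEdge i j ∧ u = .of i * .of j ∧ v = .of j * .of i)

/-- The Artin monoid of type `Eₙ`. -/
abbrev M (n : ℕ) := PresentedMonoid (rels n)

/-- The generator `x_{i+1}`. -/
def x {n : ℕ} (i : Fin n) : M n := PresentedMonoid.of (rels n) i

/-- The generator `x_{i+1}` as a function of a natural number (`1` out of range). -/
def X (n : ℕ) (i : ℕ) : M n := if h : i < n then x ⟨i, h⟩ else 1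

/-- `a` left-divides `b`. -/
def LeftDvd {P : Type*} [Monoid P] (a b : P) : Prop := ∃ c, b = a * c

/-- `d` is the least common left multiple of the set `S`. -/
def IsLeftLcm {P : Type*} [Monoid P] (S : Set P) (d : P) : Prop :=
  (∀ a ∈ S, LeftDvd a d) ∧ ∀ w, (∀ a ∈ S, LeftDvd a w) → LeftDvd d w

/-- The element `V₆ = (x₆x₅x₃x₂x₁x₄x₃x₂x₅x₃x₄)(x₆x₅x₃x₂x₁)` (written with `0`-based
generator indices). -/
def V6 (n : ℕ) : M n :=
  (X n 5 * X n 4 * X n 2 * X n 1 * X n 0 * X n 3 * X n 2 * X n 1 * X n 4 * X n 2 * X n 3) *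
    (X n 5 * X n 4 * X n 2 * X n 1 * X n 0)

/-- The element `V₇ = x₇V₆(x₇x₆x₅x₃x₂x₄x₃x₅x₆)x₇`. -/
def V7 (n : ℕ) : M n :=
  X n 6 * V6 n *
    (X n 6 * X n 5 * X n 4 * X n 2 * X n 1 * X n 3 * X n 2 * X n 4 * X n 5) * X n 6

/-- The element `V₈ = x₈V₇x₈V₇x₈`. -/
def V8 (n : ℕ) : M n := X n 7 * V7 n * X n 7 * V7 n * X n 7

/-- The Garside element of the `D₅` sub-monoid:
`D = x₁(x₂x₁)(x₃x₂x₁)(x₄x₃x₂x₁)·(x₅x₃x₂x₁)(x₄x₃x₂)(x₅x₃)x₄`. -/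
def D (n : ℕ) : M n :=
  X n 0 * (X n 1 * X n 0) * (X n 2 * X n 1 * X n 0) * (X n 3 * X n 2 * X n 1 * X n 0) *
    (X n 4 * X n 2 * X n 1 * X n 0) * (X n 3 * X n 2 * X n 1) * (X n 4 * X n 2) * X n 3

instance (i j : ℕ) : Decidable (IsEdge i j) := by
  unfold IsEdge; infer_instance

/-- Adjacency of `0`-based indices in the Coxeter graph. -/
abbrev Adj (i j : ℕ) : Prop := IsEdge i j ∨ IsEdge j i

lemma braid_of_isEdge {i j : ℕ} (h : IsEdge i j) :
    X 8 i * X 8 j * X 8 i = X 8 j * X 8 i * X 8 j := by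
  have hi : i < 8 := by unfold IsEdge at h; omega
  have hj : j < 8 := by unfold IsEdge at h; omega
  simp only [X, hi, hj, dif_pos]
  exact PresentedMonoid.mk_eq_mk_of_rel (Or.inl ⟨⟨i, hi⟩, ⟨j, hj⟩, h, rfl, rfl⟩)

lemma braid {i j : ℕ} (h : Adj i j) :
    X 8 i * X 8 j * X 8 i = X 8 j * X 8 i * X 8 j := by
  rcases h with h | h
  · exact braid_of_isEdge h
  · exact (braid_of_isEdge h).symm

lemma comm_of_lt {i j : ℕ} (hij : i < j) (h : ¬ IsEdge i j) :
    X 8 i * X 8 j = X 8 j * X 8 i := by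
  by_cases hj : j < 8
  · have hi : i < 8 := hij.trans hj
    simp only [X, hi, hj, dif_pos]
    exact PresentedMonoid.mk_eq_mk_of_rel (Or.inr ⟨⟨i, hi⟩, ⟨j, hj⟩, hij, h, rfl, rfl⟩)
  -- Out of range, `X 8 j = 1`.
  · simp [X, hj]

lemma comm {i j : ℕ} (h : ¬ Adj i j) : X 8 i * X 8 j = X 8 j * X 8 i := by
  rw [not_or] at h
  rcases lt_trichotomy i j with hij | rfl | hij
  · exact comm_of_lt hij h.1
  · rfl
  · exact (comm_of_lt hij h.2).symm

/-- The element of the Artin monoid of type `E₈` represented by a word in the `0`-based indices of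
the generators. -/
def ev (w : List ℕ) : M 8 := (w.map (X 8)).prod

@[simp] lemma ev_nil : ev [] = 1 := rfl

@[simp] lemma ev_cons (a : ℕ) (w : List ℕ) : ev (a :: w) = X 8 a * ev w := by
  simp [ev]

@[simp] lemma ev_append (v w : List ℕ) : ev (v ++ w) = ev v * ev w := by
  simp [ev]

/-- `extract n a w` looks for a word representing the quotient by the generator `a` on the left
of the element represented by `w`; the recursion depth is bounded by `n`.
When `w = b :: v` with `b` joined to `a`, a word `v = a * b * v₂` gives
`b * v = b * a * b * v₂ = a * (b * a * v₂)`. -/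
def extract : ℕ → ℕ → List ℕ → Option (List ℕ)
  | 0, _, _ => none
  | _ + 1, _, [] => none
  | n + 1, a, b :: v =>
    if a = b then some v
    else if Adj a b then
      match extract n a v with
      | none => none
      | some v₁ =>
        match extract n b v₁ with
        | none => none
        | some v₂ => some (b :: a :: v₂)
    else
      match extract n a v with
      | none => none
      | some v₁ => some (b :: v₁)

lemma extract_sound (n a : ℕ) (w w' : List ℕ) (h : extract n a w = some w') :
    ev w = X 8 a * ev w' := by
  induction n generalizing a w w' with
  | zero => simp [extract] at h
  | succ n ih =>
    cases w with
    | nil => simp [extract] at h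
    | cons b v =>
      rw [extract] at h
      by_cases hab : a = b
      · subst hab
        simp_all
      · rw [if_neg hab] at h
        by_cases hadj : Adj a b
        · rw [if_pos hadj] at h
          cases h₁ : extract n a v with
          | none => simp [h₁] at h
          | some v₁ =>
            cases h₂ : extract n b v₁ with
            | none => simp [h₁, h₂] at h
            | some v₂ =>
              simp only [h₁, h₂, Option.some.injEq] at h
              subst h
              have key := congrArg (· * ev v₂) (braid hadj)
              simp only [mul_assoc] at key
              simp only [ev_cons, ih _ _ _ h₁, ih _ _ _ h₂, key]
        · have hcomm := comm hadj
          rw [if_neg hadj] at h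
          cases h₁ : extract n a v with
          | none => simp [h₁] at h
          | some v₁ =>
            simp only [h₁, Option.some.injEq] at h
            subst h
            simp only [ev_cons, ih _ _ _ h₁, ← mul_assoc, hcomm]

/-- Compares two positive words by dividing both by the letters of the first, from left to
right. The recursion bound given to `extract` is the length of the second word, since each
recursive call of `extract` is made on a shorter word. -/
def sameElt : List ℕ → List ℕ → Bool
  | [], [] => true
  | [], _ :: _ => false
  | a :: u, v =>
    match extract v.length a v with
    | none => false
    | some v' => sameElt u v'

lemma sameElt_sound (u v : List ℕ) (h : sameElt u v = true) : ev u = ev v := by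
  induction u generalizing v with
  | nil => cases v <;> simp_all [sameElt]
  | cons a u ih =>
    rw [sameElt] at h
    cases h₁ : extract v.length a v with
    | none => simp [h₁] at h
    | some v' =>
      simp only [h₁] at h
      rw [ev_cons, ih _ h, extract_sound _ _ _ _ h₁]

/-- The word defining `V7`. -/
def word7 : List ℕ :=
  [6, 5, 4, 2, 1, 0, 3, 2, 1, 4, 2, 3, 5, 4, 2, 1, 0, 6, 5, 4, 2, 1, 3, 2, 4, 5, 6]

/-- The word defining `V8`. -/
def word8 : List ℕ := 7 :: word7 ++ 7 :: word7 ++ [7]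

lemma ev_word7 : ev word7 = V7 8 := by
  simp [word7, V7, V6, mul_assoc]

lemma ev_word8 : ev word8 = V8 8 := by
  simp [word8, V8, ev_word7, mul_assoc]

lemma sameElt_word8 :
    ∀ i < 7, sameElt (i :: word8) (word8 ++ [i]) = true := by
  decide +kernel

lemma X_mul_V8 (i : ℕ) (hi : i < 7) : X 8 i * V8 8 = V8 8 * X 8 i := by
  simpa [ev_word8] using sameElt_sound _ _ (sameElt_word8 i hi)

/-- In the Artin monoid of type `E₈`: `xᵢV₈ = V₈xᵢ` for every `i ∈ {1,…,7}`; in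
particular `x₇V₈ = V₈x₇`. -/
theorem statement19 :
    (∀ i : Fin 8, (i : ℕ) < 7 → x i * V8 8 = V8 8 * x i) ∧
    X 8 6 * V8 8 = V8 8 * X 8 6 := by
  refine ⟨fun i hi => ?_, X_mul_V8 6 (by norm_num)⟩
  simpa [X] using X_mul_V8 i hi

end ArtinE
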